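/- Let n ≥ 1 and k, r ≥ 1 be integers. The polynomial G_{k,r} is Schur-concave on [0,∞)^n: whenever x, y ∈ [0,∞)^n and x majorizes y, one has G_{k,r}(x) ≤ G_{k,r}(y). -/

import Mathlib

open Finset MeasureTheory

/-- `G n k r x`: the sum over all n-tuples p of nonnegative integers with `∑ i, p i = k`
and at least `r` nonzero entries, of `∏ i, x i ^ p i / (p i)!`. -/
noncomputable def G (n k r : ℕ) (x : Fin n → ℝ) : ℝ :=
  ∑ κ ∈ Finset.univ.filter (fun κ : Fin n → Fin (k + 1) =>
      (∑ i, (κ i : ℕ)) = k ∧ r ≤ (Finset.univ.filter fun i => (κ i : ℕ) ≠ 0).card),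
    ∏ i, x i ^ (κ i : ℕ) / (Nat.factorial (κ i : ℕ))

/-- The sum of the `m` largest entries of `x`, i.e. the largest sum of `m` entries. -/
noncomputable def sMax (n m : ℕ) (x : Fin n → ℝ) : ℝ :=
  sSup {s : ℝ | ∃ A : Finset (Fin n), A.card = m ∧ s = ∑ i ∈ A, x i}

/-- `x` majorizes `y`: equal total sums, and for each `1 ≤ m ≤ n-1` the sum of the
`m` largest entries of `x` is at least that of `y`. -/
def Majorizes (n : ℕ) (x y : Fin n → ℝ) : Prop :=
  (∑ i, x i = ∑ i, y i) ∧ ∀ m : ℕ, 1 ≤ m → m ≤ n - 1 → sMax n m y ≤ sMax n m x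

/-!
Let `F_x(z, t) = ∏ i, (1 + z (e ^ (x i * t) - 1))`. The coefficient of `t ^ k z ^ m` in `F_x`
collects the terms of `(∑ i, x i) ^ k / k!` with exactly `m` nonzero exponents, so
`G_{k,r}(x) = (∑ i, x i) ^ k / k! - ∑_{m < r} [t ^ k z ^ m] F_x`. The product of two factors is
`(1 - z) ^ 2 + z ^ 2 e ^ ((a + b) t) + z (1 - z) (e ^ (a t) + e ^ (b t))`. Hence, if `y` arises from
`x` by moving an amount from a larger coordinate `a` to a smaller coordinate `b`, giving `a'` and
`b'`, then `F_x - F_y = z (1 - z) (e ^ (a t) + e ^ (b t) - e ^ (a' t) - e ^ (b' t)) P`, where `P` is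
the product of the other factors. Writing this as `z (1 - z) f`, the sum over `m < r` of the
coefficients of `z ^ m` telescopes to the coefficient of `z ^ r` in `z ^ 2 f`, and
the coefficients of `f` are nonnegative because powers are convex. So such a transfer does not
decrease `G_{k,r}`, and majorization is a chain of transfers (Hardy, Littlewood and Pólya).
-/

section Transfer

variable {ι α : Type*} [DecidableEq ι] [AddCommGroup α]

/-- A transfer moves an amount `δ` from a coordinate `i` to a coordinate `j`, with `δ` at most the
gap `x i - x j` (also known as a Robin Hood transfer, or `T`-transform). -/
def IsTransfer [LE α] (x y : ι → α) : Prop :=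
  ∃ i j δ, i ≠ j ∧ 0 ≤ δ ∧ δ ≤ x i - x j ∧ y = x - Pi.single i δ + Pi.single j δ

variable {x y : ι → α}

lemma IsTransfer.sum_eq [Fintype ι] [LE α] (h : IsTransfer x y) : ∑ i, y i = ∑ i, x i := by
  obtain ⟨i, j, δ, -, -, -, rfl⟩ := h
  simp [sum_add_distrib]

lemma IsTransfer.nonneg [LinearOrder α] [IsOrderedAddMonoid α] (h : IsTransfer x y) (hx : 0 ≤ x) :
    0 ≤ y := by
  obtain ⟨i, j, δ, hij, hδ, hδx, rfl⟩ := h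
  intro l
  have hl : 0 ≤ x l := hx l
  have hj : 0 ≤ x j := hx j
  simp only [Pi.zero_apply, Pi.add_apply, Pi.sub_apply, Pi.single_apply]
  grind

end Transfer

section Chain

variable {ι α : Type*} [LinearOrder ι] [Fintype ι] [LocallyFiniteOrderBot ι]
  [AddCommGroup α] [LinearOrder α] [IsOrderedAddMonoid α] {x y : ι → α}

lemma exists_surplus_lt_first_deficit (hxy : x ≠ y) (hsum : ∑ i, x i = ∑ i, y i)
    (hIic : ∀ m, ∑ i ∈ Iic m, y i ≤ ∑ i ∈ Iic m, x i) :
    ∃ j l, j < l ∧ y j < x j ∧ x l < y l ∧ ∀ i < l, y i ≤ x i := by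
  have deficit : ∃ l, x l < y l := by
    by_contra! h
    exact hxy (funext fun i =>
      ((sum_eq_sum_iff_of_le fun i _ => h i).1 hsum.symm i (mem_univ i)).symm)
  obtain ⟨l, hl, hmin⟩ := WellFounded.has_min (wellFounded_lt (α := ι)) {l | x l < y l} deficit
  have before : ∀ i < l, y i ≤ x i := fun i hi => not_lt.1 fun h => hmin i h hi
  obtain ⟨j, hjl, hj⟩ : ∃ j ∈ Iic l, y j < x j := by
    by_contra! h
    exact (hIic l).not_gt (sum_lt_sum h ⟨l, mem_Iic.2 le_rfl, hl⟩)
  refine ⟨j, l, (mem_Iic.1 hjl).lt_of_ne ?_, hj, hl, before⟩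
  rintro rfl
  exact hj.not_gt hl

lemma exists_isTransfer_card_ne_lt (hxy : x ≠ y) (hy : Antitone y)
    (hsum : ∑ i, x i = ∑ i, y i) (hIic : ∀ m, ∑ i ∈ Iic m, y i ≤ ∑ i ∈ Iic m, x i) :
    ∃ x', IsTransfer x x' ∧ #{i | x' i ≠ y i} < #{i | x i ≠ y i} ∧
      ∀ m, ∑ i ∈ Iic m, y i ≤ ∑ i ∈ Iic m, x' i := by
  obtain ⟨j, l, hjl, hj, hl, before⟩ := exists_surplus_lt_first_deficit hxy hsum hIic
  have hyjl : y l ≤ y j := hy hjl.le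
  -- The largest amount that overshoots neither target, so that one of the two is attained.
  set δ := min (x j - y j) (y l - x l)
  set x' := x - Pi.single j δ + Pi.single l δ with hx'
  have x'_apply (i : ι) : x' i = x i - (if i = j then δ else 0) + (if i = l then δ else 0) := by
    simp [hx', Pi.single_apply]
  refine ⟨x', ⟨j, l, δ, hjl.ne, by grind, by grind, rfl⟩, card_lt_card ?_, fun m => ?_⟩
  · rw [ssubset_iff_of_subset fun i => by simp only [mem_filter_univ]; grind]
    rcases min_choice (x j - y j) (y l - x l) with h | h
    · exact ⟨j, by simp only [mem_filter_univ]; grind, by simp only [mem_filter_univ]; grind⟩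
    · exact ⟨l, by simp only [mem_filter_univ]; grind, by simp only [mem_filter_univ]; grind⟩
  · rcases lt_or_ge m l with hm | hm
    · refine sum_le_sum fun i hi => ?_
      have hil : i < l := (mem_Iic.1 hi).trans_lt hm
      have := before i hil
      grind
    · calc ∑ i ∈ Iic m, y i ≤ ∑ i ∈ Iic m, x i := hIic m
        _ = ∑ i ∈ Iic m, x' i := by
          simp [x'_apply, sum_add_distrib, hm, hjl.le.trans hm]

lemma reflTransGen_isTransfer_of_sum_Iic_le (hy : Antitone y) (hsum : ∑ i, x i = ∑ i, y i)
    (hIic : ∀ m, ∑ i ∈ Iic m, y i ≤ ∑ i ∈ Iic m, x i) : Relation.ReflTransGen IsTransfer x y := by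
  induction h : #{i | x i ≠ y i} using Nat.strong_induction_on generalizing x with
  | _ N ih =>
    by_cases hxy : x = y
    · rw [hxy]
    obtain ⟨x', hx', hcard, hIic'⟩ := exists_isTransfer_card_ne_lt hxy hy hsum hIic
    exact .head hx' (ih _ (h ▸ hcard) (hx'.sum_eq.trans hsum) hIic' rfl)

end Chain

section Majorization

lemma sum_le_sum_Iic_of_card_eq {ι α : Type*} [LinearOrder ι] [LocallyFiniteOrderBot ι]
    [AddCommGroup α] [PartialOrder α] [IsOrderedAddMonoid α] {x : ι → α} (hx : Antitone x)
    {m : ι} {A : Finset ι} (hA : #A = #(Iic m)) : ∑ i ∈ A, x i ≤ ∑ i ∈ Iic m, x i := by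
  rw [← sum_sdiff_le_sum_sdiff]
  calc ∑ i ∈ A \ Iic m, x i ≤ #(A \ Iic m) • x m := by
        refine sum_le_card_nsmul _ _ _ fun i hi => hx ?_
        simp only [mem_sdiff, mem_Iic, not_le] at hi
        exact hi.2.le
    _ = #(Iic m \ A) • x m := by rw [card_sdiff_comm hA]
    _ ≤ ∑ i ∈ Iic m \ A, x i :=
        card_nsmul_le_sum _ _ _ fun i hi => hx (mem_Iic.1 (mem_sdiff.1 hi).1)

variable {n : ℕ}

lemma sMax_comp_perm (m : ℕ) (σ : Equiv.Perm (Fin n)) (x : Fin n → ℝ) :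
    sMax n m (x ∘ σ) = sMax n m x := by
  unfold sMax
  congr 1
  ext s
  constructor
  · rintro ⟨A, rfl, rfl⟩
    exact ⟨A.map σ.toEmbedding, by simp, by simp⟩
  · rintro ⟨A, rfl, rfl⟩
    exact ⟨A.map σ.symm.toEmbedding, by simp, by simp⟩

lemma Majorizes.comp_perm {x y : Fin n → ℝ} (h : Majorizes n x y) (σ τ : Equiv.Perm (Fin n)) :
    Majorizes n (x ∘ σ) (y ∘ τ) := by
  refine ⟨?_, fun m hm hmn => ?_⟩
  · simpa only [Function.comp_apply, Equiv.sum_comp] using h.1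
  · simpa only [sMax_comp_perm] using h.2 m hm hmn

lemma sMax_of_antitone {x : Fin n → ℝ} (hx : Antitone x) (m : Fin n) :
    sMax n (m + 1) x = ∑ i ∈ Iic m, x i := by
  refine IsGreatest.csSup_eq ⟨⟨Iic m, Fin.card_Iic m, rfl⟩, ?_⟩
  rintro _ ⟨A, hA, rfl⟩
  exact sum_le_sum_Iic_of_card_eq hx (hA.trans (Fin.card_Iic m).symm)

lemma Majorizes.sum_Iic_le {x y : Fin n → ℝ} (h : Majorizes n x y) (hx : Antitone x)
    (hy : Antitone y) (m : Fin n) : ∑ i ∈ Iic m, y i ≤ ∑ i ∈ Iic m, x i := by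
  rcases eq_or_ne ((m : ℕ) + 1) n with hm | hm
  · have : Iic m = univ :=
      eq_univ_iff_forall.2 fun i => mem_Iic.2 (Fin.le_def.2 (by omega))
    rw [this, h.1]
  · rw [← sMax_of_antitone hx, ← sMax_of_antitone hy]
    exact h.2 _ (by omega) (by omega)

lemma exists_antitone_comp_perm (x : Fin n → ℝ) : ∃ σ : Equiv.Perm (Fin n), Antitone (x ∘ σ) :=
  ⟨Fin.revPerm.trans (Tuple.sort x), (Tuple.monotone_sort x).comp_antitone Fin.rev_anti⟩

end Majorization

section DoubleSeries

open PowerSeries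
open scoped Nat

section PowerSeriesLemmas

variable {R : Type*}

/-- The subsemiring of power series all of whose coefficients lie in the subsemiring `S`. Iterating
it from the nonnegative scalars expresses coefficientwise nonnegativity of a double series. -/
def coeffSubsemiring [Semiring R] (S : Subsemiring R) : Subsemiring R⟦X⟧ where
  carrier := {f | ∀ n, coeff n f ∈ S}
  zero_mem' n := by simp only [map_zero, zero_mem]
  one_mem' n := by rw [coeff_one]; split_ifs <;> simp only [zero_mem, one_mem]
  add_mem' hf hg n := by rw [map_add]; exact add_mem (hf n) (hg n)
  mul_mem' hf hg n := by
    rw [coeff_mul]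
    exact sum_mem fun p _ => mul_mem (hf p.1) (hg p.2)

lemma C_mem_coeffSubsemiring [Semiring R] {S : Subsemiring R} {a : R} (ha : a ∈ S) :
    C a ∈ coeffSubsemiring S := fun n => by
  rw [coeff_C]; split_ifs <;> simp only [ha, zero_mem]

lemma X_mem_coeffSubsemiring [Semiring R] (S : Subsemiring R) :
    X ∈ coeffSubsemiring S := fun n => by
  rw [coeff_X]; split_ifs <;> simp only [zero_mem, one_mem]

lemma sum_range_coeff_X_mul_one_sub_X_mul [CommRing R] (f : R⟦X⟧) (r : ℕ) :
    ∑ m ∈ range r, coeff m (X * (1 - X) * f) = coeff r (X ^ 2 * f) := by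
  have telescope (m : ℕ) : coeff m (X * (1 - X) * f) =
      coeff (m + 1) (X ^ 2 * f) - coeff m (X ^ 2 * f) := by
    rw [show X ^ 2 * f = X * (X * f) by ring, coeff_succ_X_mul, ← map_sub]
    congr 1; ring
  simp_rw [telescope]
  rw [sum_range_sub fun m => coeff m (X ^ 2 * f)]
  simp [coeff_X_pow_mul']

lemma prod_rescale_exp {ι : Type*} [CommRing R] [Algebra ℚ R] (s : Finset ι) (x : ι → R) :
    ∏ i ∈ s, rescale (x i) (exp R) = rescale (∑ i ∈ s, x i) (exp R) := by
  induction s using Finset.cons_induction with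
  | empty => simp
  | cons i s hi ih => rw [prod_cons, sum_cons, ih, exp_mul_exp_eq_exp_add]

lemma coeff_rescale_exp {𝕜 : Type*} [Field 𝕜] [CharZero 𝕜] (a : 𝕜) (n : ℕ) :
    coeff n (rescale a (exp 𝕜)) = a ^ n / n ! := by
  simp [coeff_rescale, coeff_exp, div_eq_mul_inv]

end PowerSeriesLemmas

section SupportSeries

variable {ι 𝕜 : Type*} [Field 𝕜] [CharZero 𝕜]

/-- The exponential series `e ^ (a t)` as a double power series: `t` is the outer variable, and the
coefficients are constant in the inner variable `z`. -/
noncomputable def expSeries (a : 𝕜) : 𝕜⟦X⟧⟦X⟧ := map C (rescale a (exp 𝕜))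

lemma coeff_expSeries (a : 𝕜) (n : ℕ) : coeff n (expSeries a) = C (a ^ n / n !) := by
  rw [expSeries, coeff_map, coeff_rescale_exp]

lemma expSeries_mul_expSeries (a b : 𝕜) : expSeries a * expSeries b = expSeries (a + b) := by
  simp only [expSeries, ← map_mul, exp_mul_exp_eq_exp_add]

/-- The factor `1 + z (e ^ (a t) - 1)`, in which `z` marks the terms of positive degree in `t`. -/
noncomputable def supportFactor (a : 𝕜) : 𝕜⟦X⟧⟦X⟧ := 1 + C X * (expSeries a - 1)

lemma coeff_supportFactor (a : 𝕜) (n : ℕ) :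
    coeff n (supportFactor a) = C (a ^ n / n !) * X ^ (if n = 0 then 0 else 1) := by
  rw [supportFactor, map_add, coeff_C_mul, map_sub, coeff_expSeries, coeff_one]
  split_ifs with hn
  · simp [hn]
  · ring

lemma supportFactor_mul_supportFactor (a b : 𝕜) :
    supportFactor a * supportFactor b = C ((1 - X) ^ 2) + C (X ^ 2) * expSeries (a + b) +
      C (X * (1 - X)) * (expSeries a + expSeries b) := by
  simp only [supportFactor, ← expSeries_mul_expSeries, map_mul, map_sub, map_pow, map_one]
  ring

variable [Fintype ι]

/-- The double generating function `∏ i, (1 + z (e ^ (x i * t) - 1))`. The coefficient of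
`t ^ k z ^ m` is the part of `(∑ i, x i) ^ k / k!` carried by the exponent vectors with `m` nonzero
entries. -/
noncomputable def supportSeries (x : ι → 𝕜) : 𝕜⟦X⟧⟦X⟧ := ∏ i, supportFactor (x i)

lemma supportSeries_comp_perm (σ : Equiv.Perm ι) (x : ι → 𝕜) :
    supportSeries (x ∘ σ) = supportSeries x :=
  Equiv.prod_comp σ fun i => supportFactor (x i)

lemma support_eq_filter_univ {M : Type*} [Zero M] [DecidableEq M] (p : ι →₀ M) :
    p.support = ({i | p i ≠ 0} : Finset ι) := by
  ext; simp only [Finsupp.mem_support_iff, mem_filter_univ]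

variable [DecidableEq ι]

lemma coeff_supportSeries (x : ι → 𝕜) (k : ℕ) :
    coeff k (supportSeries x) =
      ∑ p ∈ univ.finsuppAntidiag k, C (∏ i, x i ^ p i / (p i)!) * X ^ #p.support := by
  rw [supportSeries, coeff_prod]
  refine sum_congr rfl fun p _ => ?_
  have card_support : ∑ i, (if p i = 0 then 0 else 1) = #p.support := by
    simp_rw [support_eq_filter_univ, card_filter, ite_not]
  simp_rw [coeff_supportFactor, prod_mul_distrib, prod_pow_eq_pow_sum, card_support, map_prod]

lemma sum_range_coeff_coeff_supportSeries (x : ι → 𝕜) (k r : ℕ) :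
    ∑ m ∈ range r, coeff m (coeff k (supportSeries x)) =
      ∑ p ∈ univ.finsuppAntidiag k with #p.support < r, ∏ i, x i ^ p i / (p i)! := by
  simp_rw [coeff_supportSeries, map_sum, coeff_C_mul, coeff_X_pow, mul_ite, mul_one, mul_zero]
  rw [sum_comm]
  simp_rw [sum_ite_eq', mem_range, sum_filter]

lemma sum_finsuppAntidiag_prod_pow_div_factorial (x : ι → 𝕜) (k : ℕ) :
    ∑ p ∈ univ.finsuppAntidiag k, ∏ i, x i ^ p i / (p i)! = (∑ i, x i) ^ k / k ! := by
  rw [← coeff_rescale_exp, ← prod_rescale_exp, coeff_prod]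
  simp_rw [coeff_rescale_exp]

lemma supportSeries_sub_supportSeries_transfer (x : ι → 𝕜) {i j : ι} (hij : i ≠ j) (δ : 𝕜) :
    supportSeries x - supportSeries (x - Pi.single i δ + Pi.single j δ) =
      C (X * (1 - X)) * ((expSeries (x i) + expSeries (x j) -
        (expSeries (x i - δ) + expSeries (x j + δ))) * ∏ l ∈ {i, j}ᶜ, supportFactor (x l)) := by
  set y := x - Pi.single i δ + Pi.single j δ with hy
  have yi : y i = x i - δ := by simp [hy, hij]
  have yj : y j = x j + δ := by simp [hy, hij.symm]
  have rest : ∏ l ∈ {i, j}ᶜ, supportFactor (y l) = ∏ l ∈ {i, j}ᶜ, supportFactor (x l) := by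
    refine prod_congr rfl fun l hl => ?_
    simp only [mem_compl, mem_insert, mem_singleton, not_or] at hl
    simp [hy, hl.1, hl.2]
  simp only [supportSeries]
  rw [← prod_mul_prod_compl {i, j}, ← prod_mul_prod_compl {i, j} fun l => supportFactor (y l), rest,
    prod_pair hij, prod_pair hij, supportFactor_mul_supportFactor, supportFactor_mul_supportFactor,
    yi, yj, sub_add_add_cancel]
  ring

end SupportSeries

section Nonneg

lemma map_add_map_le_of_mem_segment {𝕜 E β : Type*} [CommRing 𝕜] [PartialOrder 𝕜]
    [AddCommGroup E] [Module 𝕜 E] [AddCommGroup β] [PartialOrder β] [IsOrderedAddMonoid β]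
    [Module 𝕜 β] {s : Set E} {f : E → β} (hf : ConvexOn 𝕜 s f) {a b u v : E} (ha : a ∈ s)
    (hb : b ∈ s) (hu : u ∈ segment 𝕜 a b) (huv : u + v = a + b) : f u + f v ≤ f a + f b := by
  obtain ⟨p, q, hp, hq, hpq, rfl⟩ := hu
  obtain rfl : v = q • a + p • b := by
    rw [← sub_eq_zero]
    linear_combination (norm := module) huv - hpq • (a + b)
  calc f (p • a + q • b) + f (q • a + p • b)
      ≤ (p • f a + q • f b) + (q • f a + p • f b) :=
        add_le_add (hf.2 ha hb hp hq hpq) (hf.2 ha hb hq hp (by rw [add_comm, hpq]))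
    _ = (p + q) • (f a + f b) := by module
    _ = f a + f b := by rw [hpq, one_smul]

variable {ι 𝕜 : Type*} [Field 𝕜] [LinearOrder 𝕜] [IsStrictOrderedRing 𝕜]

lemma supportFactor_mem_coeffSubsemiring_nonneg {a : 𝕜} (ha : 0 ≤ a) :
    supportFactor a ∈ coeffSubsemiring (coeffSubsemiring (.nonneg 𝕜)) := fun n => by
  rw [coeff_supportFactor]
  exact mul_mem (C_mem_coeffSubsemiring (Subsemiring.mem_nonneg.2 (by positivity)))
    (pow_mem (X_mem_coeffSubsemiring _) _)

lemma expSeries_add_sub_mem_coeffSubsemiring_nonneg {a b δ : 𝕜} (hb : 0 ≤ b) (hδ : 0 ≤ δ)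
    (hδab : δ ≤ a - b) :
    expSeries a + expSeries b - (expSeries (a - δ) + expSeries (b + δ)) ∈
      coeffSubsemiring (coeffSubsemiring (.nonneg 𝕜)) := fun n => by
  simp only [map_sub, map_add, coeff_expSeries]
  simp only [← map_add, ← map_sub]
  refine C_mem_coeffSubsemiring ?_
  have pow_add_pow_le : (a - δ) ^ n + (b + δ) ^ n ≤ a ^ n + b ^ n := by
    refine map_add_map_le_of_mem_segment (convexOn_pow n) (s := Set.Ici (0 : 𝕜)) (a := a) (b := b)
      (Set.mem_Ici.2 (by linarith)) hb ?_ (by ring)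
    rw [segment_symm, segment_eq_Icc (by linarith)]
    constructor <;> linarith
  rw [Subsemiring.mem_nonneg, ← add_div, ← add_div, ← sub_div]
  exact div_nonneg (sub_nonneg.2 pow_add_pow_le) (by positivity)

variable [DecidableEq ι] {x y : ι → 𝕜}

lemma IsTransfer.sum_range_coeff_coeff_supportSeries_le [Fintype ι] (h : IsTransfer x y)
    (hx : 0 ≤ x) (k r : ℕ) :
    ∑ m ∈ range r, coeff m (coeff k (supportSeries y)) ≤
      ∑ m ∈ range r, coeff m (coeff k (supportSeries x)) := by
  obtain ⟨i, j, δ, hij, hδ, hδx, rfl⟩ := h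
  rw [← sub_nonneg, ← sum_sub_distrib]
  simp_rw [← map_sub, supportSeries_sub_supportSeries_transfer x hij, coeff_C_mul]
  rw [sum_range_coeff_X_mul_one_sub_X_mul]
  refine mul_mem (pow_mem (X_mem_coeffSubsemiring (.nonneg 𝕜)) 2) ?_ r
  exact mul_mem (expSeries_add_sub_mem_coeffSubsemiring_nonneg (hx j) hδ hδx)
    (prod_mem fun l _ => supportFactor_mem_coeffSubsemiring_nonneg (hx l)) k

end Nonneg

section SchurConcavity

variable {n : ℕ}

lemma sum_fin_eq_sum_finsuppAntidiag {ι M : Type*} [Fintype ι] [DecidableEq ι] [AddCommMonoid M]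
    (k : ℕ) (f : (ι → ℕ) → M) :
    ∑ κ : ι → Fin (k + 1) with ∑ i, (κ i : ℕ) = k, f (fun i => κ i) =
      ∑ p ∈ univ.finsuppAntidiag k, f p := by
  have le_of_mem {p : ι →₀ ℕ} (hp : p ∈ univ.finsuppAntidiag k) (i : ι) : p i < k + 1 := by
    rw [mem_finsuppAntidiag] at hp
    rw [Nat.lt_succ_iff, ← hp.1]
    exact single_le_sum_of_canonicallyOrdered (mem_univ i)
  refine sum_bij' (fun κ _ => Finsupp.equivFunOnFinite.symm fun i => (κ i : ℕ))
    (fun p hp i => ⟨p i, le_of_mem hp i⟩) ?_ ?_ ?_ ?_ ?_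
  · intro κ hκ; simpa using hκ
  · intro p hp; simpa using hp
  · intro κ _; rfl
  · intro p _; ext; rfl
  · intro κ _; rfl

lemma G_eq_sum_finsuppAntidiag (k r : ℕ) (x : Fin n → ℝ) :
    G n k r x = ∑ p ∈ univ.finsuppAntidiag k with r ≤ #p.support, ∏ i, x i ^ p i / (p i)! := by
  have := sum_fin_eq_sum_finsuppAntidiag k fun p : Fin n → ℕ =>
    if r ≤ #{i | p i ≠ 0} then ∏ i, x i ^ p i / (p i)! else 0
  rw [G, ← filter_filter, sum_filter, this, sum_filter]
  simp_rw [support_eq_filter_univ]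

lemma G_eq_sub (k r : ℕ) (x : Fin n → ℝ) :
    G n k r x = (∑ i, x i) ^ k / (k !) -
      ∑ m ∈ range r, coeff m (coeff k (supportSeries x)) := by
  rw [eq_sub_iff_add_eq, G_eq_sum_finsuppAntidiag, sum_range_coeff_coeff_supportSeries,
    ← sum_finsuppAntidiag_prod_pow_div_factorial]
  simp_rw [← not_le]
  rw [sum_filter_add_sum_filter_not]

lemma G_comp_perm (k r : ℕ) (σ : Equiv.Perm (Fin n)) (x : Fin n → ℝ) :
    G n k r (x ∘ σ) = G n k r x := by
  simp only [G_eq_sub, supportSeries_comp_perm, Function.comp_apply, Equiv.sum_comp]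

lemma IsTransfer.G_le {x y : Fin n → ℝ} (h : IsTransfer x y) (hx : 0 ≤ x) (k r : ℕ) :
    G n k r x ≤ G n k r y := by
  rw [G_eq_sub, G_eq_sub, h.sum_eq]
  exact sub_le_sub_left (h.sum_range_coeff_coeff_supportSeries_le hx k r) _

lemma G_le_of_reflTransGen {x y : Fin n → ℝ} (h : Relation.ReflTransGen IsTransfer x y)
    (hx : 0 ≤ x) (k r : ℕ) : G n k r x ≤ G n k r y := by
  induction h using Relation.ReflTransGen.head_induction_on with
  | refl => exact le_rfl
  | head hxz _ ih => exact (hxz.G_le hx k r).trans (ih (hxz.nonneg hx))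

end SchurConcavity

end DoubleSeries

theorem stmt11 (n k r : ℕ) (hn : 1 ≤ n) (hk : 1 ≤ k) (hr : 1 ≤ r)
    (x y : Fin n → ℝ) (hx : ∀ i, 0 ≤ x i) (hy : ∀ i, 0 ≤ y i)
    (hxy : Majorizes n x y) :
    G n k r x ≤ G n k r y := by
  obtain ⟨σ, hσ⟩ := exists_antitone_comp_perm x
  obtain ⟨τ, hτ⟩ := exists_antitone_comp_perm y
  have hxy' : Majorizes n (x ∘ σ) (y ∘ τ) := hxy.comp_perm σ τ
  rw [← G_comp_perm k r σ x, ← G_comp_perm k r τ y]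
  exact G_le_of_reflTransGen
    (reflTransGen_isTransfer_of_sum_Iic_le hτ hxy'.1 (hxy'.sum_Iic_le hσ hτ))
    (fun i => hx (σ i)) k r
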